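/- Define Λ(x) := 1/(2Ψ(x+1) − ln(x(x+1))) − 3x(x+1) for real x > 0, where Ψ is the digamma function. Then the derivative Λ'(x) is positive for all x > 28. -/

import Mathlib

open Real

/-- The digamma function `Ψ(x) = Γ'(x)/Γ(x) = (log ∘ Γ)'(x)`. -/
noncomputable def digamma (x : ℝ) : ℝ := deriv (fun y : ℝ => Real.log (Real.Gamma y)) x

/-- `Λ(x) = 1/(2Ψ(x+1) − ln(x(x+1))) − 3x(x+1)`. -/
noncomputable def lodgeLambda (x : ℝ) : ℝ :=
  1 / (2 * digamma (x + 1) - Real.log (x * (x + 1))) - 3 * x * (x + 1)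

/-!
Write `F(x) = 2Ψ(x+1) − ln(x(x+1))`, so that `Λ = 1/F − 3x(x+1)` and `Λ'(x) > 0` says
`3(2x+1) F(x)² < −F'(x)`. The recurrence of `Ψ` makes `F(x) − F(x+1)` elementary. A function that
converges at infinity is monotone as soon as its unit differences are, since it is its limit plus
the telescoping sum of those differences. Applied to the error of truncations of Ramanujan's
expansion of `F` in powers of `1/(x(x+1))`, this bounds `F` on both sides and, as it yields
monotonicity, also `F'` from above. What remains is an inequality between polynomials.
-/

open Filter Set Topology

theorem tendsto_sum_range_sub_add_one {E : Type*} [AddCommGroup E] [TopologicalSpace E]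
    [ContinuousSub E] {g : ℝ → E} {l : E} (hl : Tendsto g atTop (𝓝 l)) (x : ℝ) :
    Tendsto (fun N : ℕ => ∑ n ∈ Finset.range N, (g (x + n) - g (x + n + 1))) atTop
      (𝓝 (g x - l)) := by
  have shifted : Tendsto (fun N : ℕ => g (x + N)) atTop (𝓝 l) :=
    hl.comp (tendsto_atTop_add_const_left _ _ tendsto_natCast_atTop_atTop)
  refine (shifted.const_sub (g x)).congr fun N => ?_
  simpa [add_assoc] using (Finset.sum_range_sub' (fun n : ℕ => g (x + n)) N).symm

theorem antitoneOn_of_antitoneOn_sub_add_one {g : ℝ → ℝ} {a l : ℝ}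
    (hg : AntitoneOn (fun x => g x - g (x + 1)) (Ioi a)) (hl : Tendsto g atTop (𝓝 l)) :
    AntitoneOn g (Ioi a) := by
  intro x hx y hy hxy
  have mem_add (n : ℕ) {t : ℝ} (ht : t ∈ Ioi a) : t + n ∈ Ioi a :=
    mem_Ioi.2 (lt_add_of_lt_of_nonneg ht n.cast_nonneg)
  have := le_of_tendsto_of_tendsto' (tendsto_sum_range_sub_add_one hl y)
    (tendsto_sum_range_sub_add_one hl x) fun N => Finset.sum_le_sum fun n _ =>
      hg (mem_add n hx) (mem_add n hy) (by gcongr)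
  linarith

theorem antitoneOn_Ioi_of_hasDerivAt_sub_add_one {g g' : ℝ → ℝ} {a l : ℝ}
    (hg : ∀ x, a < x → HasDerivAt (fun y => g y - g (y + 1)) (g' x) x)
    (hg' : ∀ x, a < x → g' x ≤ 0) (hl : Tendsto g atTop (𝓝 l)) : AntitoneOn g (Ioi a) := by
  refine antitoneOn_of_antitoneOn_sub_add_one ?_ hl
  refine antitoneOn_of_hasDerivWithinAt_nonpos (f' := g') (convex_Ioi a)
    (fun x hx => (hg x hx).continuousAt.continuousWithinAt) ?_ ?_
  · rw [interior_Ioi]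
    exact fun x hx => (hg x hx).hasDerivWithinAt
  · rw [interior_Ioi]
    exact hg'

theorem le_of_antitoneOn_Ioi_of_tendsto {α β : Type*} [LinearOrder α] [Preorder β]
    [TopologicalSpace β] [ClosedIicTopology β] {g : α → β} {a x : α} {l : β}
    (hg : AntitoneOn g (Ioi a)) (hl : Tendsto g atTop (𝓝 l)) (hx : a < x) : l ≤ g x := by
  have : Nonempty α := ⟨x⟩
  refine le_of_tendsto hl ?_
  filter_upwards [eventually_ge_atTop x] with y hy
  exact hg hx (hx.trans_le hy) hy

theorem analyticAt_log_Gamma {x : ℝ} (hx : 0 < x) :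
    AnalyticAt ℝ (fun y => log (Gamma y)) x := by
  have complex_analytic : AnalyticAt ℂ Complex.Gamma x := by
    rw [Complex.analyticAt_iff_eventually_differentiableAt]
    filter_upwards [(isOpen_lt continuous_const Complex.continuous_re).mem_nhds
      (show 0 < (x : ℂ).re from hx)] with z hz
    refine Complex.differentiableAt_Gamma z fun m hm => ?_
    have re_pos : 0 < (-(m : ℂ)).re := hm ▸ hz
    rw [Complex.neg_re, Complex.natCast_re, neg_pos] at re_pos
    exact re_pos.not_ge m.cast_nonneg
  exact complex_analytic.re_ofReal.log (Gamma_pos_of_pos hx)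

theorem differentiableAt_digamma {x : ℝ} (hx : 0 < x) : DifferentiableAt ℝ digamma x :=
  (analyticAt_log_Gamma hx).deriv.differentiableAt

theorem log_Gamma_add_one {x : ℝ} (hx : 0 < x) :
    log (Gamma (x + 1)) = log (Gamma x) + log x := by
  rw [Gamma_add_one hx.ne', log_mul hx.ne' (Gamma_pos_of_pos hx).ne', add_comm]

theorem digamma_add_one {x : ℝ} (hx : 0 < x) : digamma (x + 1) = digamma x + 1 / x := by
  have log_Gamma_shift : (fun y => log (Gamma (y + 1))) =ᶠ[𝓝 x]
      fun y => log (Gamma y) + log y := by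
    filter_upwards [lt_mem_nhds hx] with y hy using log_Gamma_add_one hy
  rw [digamma, ← deriv_comp_add_const, log_Gamma_shift.deriv_eq,
    deriv_fun_add (analyticAt_log_Gamma hx).differentiableAt (differentiableAt_log hx.ne'),
    Real.deriv_log, one_div, digamma]

theorem slope_log_Gamma {x : ℝ} (hx : 0 < x) : slope (log ∘ Gamma) x (x + 1) = log x := by
  simp [slope_def_field, log_Gamma_add_one hx]

theorem digamma_le_log {x : ℝ} (hx : 0 < x) : digamma x ≤ log x := by
  have := convexOn_log_Gamma.deriv_le_slope hx (add_pos hx one_pos) (lt_add_one x)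
    (analyticAt_log_Gamma hx).differentiableAt
  rwa [slope_log_Gamma hx] at this

theorem log_le_digamma_add_one {x : ℝ} (hx : 0 < x) : log x ≤ digamma (x + 1) := by
  have := convexOn_log_Gamma.slope_le_deriv hx (add_pos hx one_pos) (lt_add_one x)
    (analyticAt_log_Gamma (add_pos hx one_pos)).differentiableAt
  rwa [slope_log_Gamma hx] at this

/-- The function `2Ψ(x+1) − ln(x(x+1))`, whose reciprocal is the transcendental part of `Λ`. -/
noncomputable def lodgeDenom (x : ℝ) : ℝ := 2 * digamma (x + 1) - log (x * (x + 1))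

theorem lodgeDenom_eq {x : ℝ} (hx : 0 < x) :
    lodgeDenom x = 2 * digamma (x + 1) - log x - log (x + 1) := by
  rw [lodgeDenom, log_mul hx.ne' (by positivity), sub_sub]

theorem tendsto_lodgeDenom : Tendsto lodgeDenom atTop (𝓝 0) := by
  have log_gap := tendsto_log_comp_add_sub_log 1
  refine tendsto_of_tendsto_of_tendsto_of_le_of_le' (by simpa using log_gap.neg) log_gap ?_ ?_
  all_goals
    filter_upwards [eventually_gt_atTop 0] with x hx
    rw [lodgeDenom_eq hx]
  · linarith [log_le_digamma_add_one hx]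
  · linarith [digamma_le_log (add_pos hx one_pos)]

theorem differentiableAt_lodgeDenom {x : ℝ} (hx : 0 < x) : DifferentiableAt ℝ lodgeDenom x := by
  have hx1 : 0 < x + 1 := by positivity
  have hψ : DifferentiableAt ℝ (fun y => digamma (y + 1)) x :=
    (differentiableAt_digamma hx1).comp x (by fun_prop)
  exact (hψ.const_mul 2).sub (DifferentiableAt.log (by fun_prop) (by positivity))

theorem lodgeDenom_sub_add_one {x : ℝ} (hx : 0 < x) :
    lodgeDenom x - lodgeDenom (x + 1) = log (x + 2) - log x - 2 / (x + 1) := by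
  have hx1 : 0 < x + 1 := by positivity
  rw [lodgeDenom_eq hx, lodgeDenom_eq hx1, digamma_add_one hx1,
    show x + 1 + 1 = x + 2 by ring]
  ring

theorem hasDerivAt_lodgeDenom_sub_add_one {x : ℝ} (hx : 0 < x) :
    HasDerivAt (fun y => lodgeDenom y - lodgeDenom (y + 1))
      (-(2 / (x * (x + 1) ^ 2 * (x + 2)))) x := by
  have hlog := (((hasDerivAt_id' x).add_const 2).log (by positivity)).fun_sub
    (hasDerivAt_log hx.ne')
  have hinv := (hasDerivAt_const x (2 : ℝ)).fun_div ((hasDerivAt_id' x).add_const 1)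
    (by positivity)
  refine ((hlog.fun_sub hinv).congr_deriv ?_).congr_of_eventuallyEq ?_
  · field_simp
    ring
  · filter_upwards [lt_mem_nhds hx] with y hy using lodgeDenom_sub_add_one hy

/-- Ramanujan's expansion `1/(3m) − 1/(15m²) + 8/(315m³) − ⋯` of `2Ψ(x+1) − ln(x(x+1))` in powers
of `1/m`, where `m = x(x+1)`, cut after the third term, whose coefficient is left free: `c = 8/315`
gives an upper bound and each smaller `c` a lower bound for large `x`. -/
noncomputable def ramanujanApprox (c x : ℝ) : ℝ :=
  1 / 3 / (x * (x + 1)) - 1 / 15 / (x * (x + 1)) ^ 2 + c / (x * (x + 1)) ^ 3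

theorem tendsto_ramanujanApprox (c : ℝ) : Tendsto (ramanujanApprox c) atTop (𝓝 0) := by
  have hm : Tendsto (fun x : ℝ => x * (x + 1)) atTop atTop :=
    tendsto_id.atTop_mul_atTop₀ (tendsto_atTop_add_const_right _ _ tendsto_id)
  have hpow (k : ℕ) (hk : k ≠ 0) : Tendsto (fun x : ℝ => (x * (x + 1)) ^ k) atTop atTop :=
    (tendsto_pow_atTop hk).comp hm
  have hlim := ((hm.const_div_atTop (1 / 3)).sub
    ((hpow 2 two_ne_zero).const_div_atTop (1 / 15))).add ((hpow 3 three_ne_zero).const_div_atTop c)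
  rwa [sub_zero, add_zero] at hlim

theorem hasDerivAt_ramanujanApprox (c : ℝ) {x : ℝ} (hx : 0 < x) :
    HasDerivAt (ramanujanApprox c) (-((2 * x + 1) * (1 / 3 / (x * (x + 1)) ^ 2 -
      2 / 15 / (x * (x + 1)) ^ 3 + 3 * c / (x * (x + 1)) ^ 4))) x := by
  have hm : HasDerivAt (fun y : ℝ => y * (y + 1)) (1 * (x + 1) + x * 1) x :=
    (hasDerivAt_id' x).fun_mul ((hasDerivAt_id' x).add_const 1)
  have hm0 : x * (x + 1) ≠ 0 := by positivity
  have h1 := (hasDerivAt_const x (1 / 3 : ℝ)).fun_div hm hm0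
  have h2 := (hasDerivAt_const x (1 / 15 : ℝ)).fun_div (hm.fun_pow 2) (pow_ne_zero 2 hm0)
  have h3 := (hasDerivAt_const x c).fun_div (hm.fun_pow 3) (pow_ne_zero 3 hm0)
  refine ((h1.fun_sub h2).fun_add h3).congr_deriv ?_
  field_simp
  ring

theorem ramanujanApprox_pos {c x : ℝ} (hc : 1 / 300 < c) (hx : 0 < x) :
    0 < ramanujanApprox c x := by
  have hnum : 0 < 1 / 3 * (x * (x + 1)) ^ 2 - 1 / 15 * (x * (x + 1)) + c := by
    nlinarith [sq_nonneg (x * (x + 1) - 1 / 10)]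
  have hfrac : ramanujanApprox c x =
      (1 / 3 * (x * (x + 1)) ^ 2 - 1 / 15 * (x * (x + 1)) + c) / (x * (x + 1)) ^ 3 := by
    rw [ramanujanApprox]
    field_simp
  rw [hfrac]
  positivity

theorem tendsto_lodgeDenom_sub_ramanujanApprox (c : ℝ) :
    Tendsto (fun x => lodgeDenom x - ramanujanApprox c x) atTop (𝓝 0) := by
  simpa using tendsto_lodgeDenom.sub (tendsto_ramanujanApprox c)

theorem hasDerivAt_lodgeDenom_sub_ramanujanApprox_sub_add_one (c : ℝ) {x : ℝ} (hx : 0 < x) :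
    HasDerivAt
      (fun y => (lodgeDenom y - ramanujanApprox c y) -
        (lodgeDenom (y + 1) - ramanujanApprox c (y + 1)))
      (((42 * c - 16 / 15) * (x + 1) ^ 4 + (12 * c + 16 / 15) * (x + 1) ^ 2 - 6 * c) /
        (x * (x + 1) * (x + 2)) ^ 4) x := by
  have hshift := (hasDerivAt_ramanujanApprox c (add_pos hx one_pos)).comp_add_const x 1
  have h := (hasDerivAt_lodgeDenom_sub_add_one hx).fun_sub
    ((hasDerivAt_ramanujanApprox c hx).fun_sub hshift)
  refine (h.congr_deriv ?_).congr_of_eventuallyEq (.of_forall fun y => by ring)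
  rw [show x + 1 + 1 = x + 2 by ring]
  field_simp
  ring

theorem lodgeDenom_le_ramanujanApprox {x : ℝ} (hx : 0 < x) :
    lodgeDenom x ≤ ramanujanApprox (8 / 315) x := by
  have hlim := (tendsto_lodgeDenom_sub_ramanujanApprox (8 / 315)).neg
  have hderiv (y : ℝ) (hy : 0 < y) :=
    (hasDerivAt_lodgeDenom_sub_ramanujanApprox_sub_add_one (8 / 315) hy).fun_neg
  have hanti : AntitoneOn (fun y => -(lodgeDenom y - ramanujanApprox (8 / 315) y)) (Ioi 0) := by
    refine antitoneOn_Ioi_of_hasDerivAt_sub_add_one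
      (fun y hy => (hderiv y hy).congr_of_eventuallyEq (.of_forall fun z => by ring))
      (fun y hy => neg_nonpos.2 (div_nonneg ?_ (by positivity))) hlim
    nlinarith
  linarith [le_of_antitoneOn_Ioi_of_tendsto hanti hlim hx]

-- `101/4725` is the least third coefficient that `three_mul_ramanujanApprox_sq_lt` tolerates for
-- large `x`; `3/140` is a simple fraction just above it.
theorem antitoneOn_lodgeDenom_sub_ramanujanApprox :
    AntitoneOn (fun x => lodgeDenom x - ramanujanApprox (3 / 140) x) (Ioi 2) := by
  refine antitoneOn_Ioi_of_hasDerivAt_sub_add_one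
    (fun x hx => hasDerivAt_lodgeDenom_sub_ramanujanApprox_sub_add_one _ (two_pos.trans hx))
    (fun x hx => ?_) (tendsto_lodgeDenom_sub_ramanujanApprox _)
  have hsq : 9 ≤ (x + 1) ^ 2 := by nlinarith
  refine div_nonpos_of_nonpos_of_nonneg ?_ (by positivity)
  nlinarith

theorem lodgeDenom_pos {x : ℝ} (hx : 2 < x) : 0 < lodgeDenom x := by
  have hlow := le_of_antitoneOn_Ioi_of_tendsto antitoneOn_lodgeDenom_sub_ramanujanApprox
    (tendsto_lodgeDenom_sub_ramanujanApprox _) hx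
  have hpos : 0 < ramanujanApprox (3 / 140) x :=
    ramanujanApprox_pos (by norm_num) (two_pos.trans hx)
  linarith

theorem deriv_lodgeDenom_le {x : ℝ} (hx : 2 < x) :
    deriv lodgeDenom x ≤ deriv (ramanujanApprox (3 / 140)) x := by
  have hx0 : 0 < x := two_pos.trans hx
  have hderiv := (differentiableAt_lodgeDenom hx0).hasDerivAt.fun_sub
    (hasDerivAt_ramanujanApprox (3 / 140) hx0).differentiableAt.hasDerivAt
  have := antitoneOn_lodgeDenom_sub_ramanujanApprox.derivWithin_nonpos (x := x)
  rw [derivWithin_of_mem_nhds (Ioi_mem_nhds hx), hderiv.deriv] at this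
  exact sub_nonpos.1 this

theorem three_mul_ramanujanApprox_sq_lt {x : ℝ} (hx : 1 ≤ x) :
    3 * (2 * x + 1) * ramanujanApprox (8 / 315) x ^ 2 < -deriv (ramanujanApprox (3 / 140)) x := by
  rw [(hasDerivAt_ramanujanApprox _ (by positivity)).deriv, neg_neg, ← sub_pos, ramanujanApprox]
  have hm : 1 ≤ x * (x + 1) := by nlinarith
  set m := x * (x + 1)
  have hnum : 0 < 1 / 6300 * m ^ 2 + 16 / 1575 * m - 64 / 33075 := by nlinarith
  have hpos : 0 < (2 * x + 1) * (1 / 6300 * m ^ 2 + 16 / 1575 * m - 64 / 33075) / m ^ 6 := by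
    positivity
  refine hpos.trans_eq ?_
  field_simp
  ring

theorem hasDerivAt_lodgeLambda {x : ℝ} (hx : 0 < x) (hF : lodgeDenom x ≠ 0) :
    HasDerivAt lodgeLambda (-deriv lodgeDenom x / lodgeDenom x ^ 2 - 3 * (2 * x + 1)) x := by
  have hrec := (hasDerivAt_const x (1 : ℝ)).fun_div (differentiableAt_lodgeDenom hx).hasDerivAt hF
  have hquad := ((hasDerivAt_id' x).const_mul 3).fun_mul ((hasDerivAt_id' x).add_const 1)
  refine (hrec.fun_sub hquad).congr_deriv ?_
  ring

theorem lodgeLambda_deriv_pos_general (x : ℝ) (hx : 2 < x) : 0 < deriv lodgeLambda x := by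
  have hx0 : 0 < x := two_pos.trans hx
  have hF : 0 < lodgeDenom x := lodgeDenom_pos hx
  rw [(hasDerivAt_lodgeLambda hx0 hF.ne').deriv, sub_pos, lt_div_iff₀ (by positivity)]
  calc 3 * (2 * x + 1) * lodgeDenom x ^ 2
      ≤ 3 * (2 * x + 1) * ramanujanApprox (8 / 315) x ^ 2 := by
        gcongr
        exact lodgeDenom_le_ramanujanApprox hx0
    _ < -deriv (ramanujanApprox (3 / 140)) x := three_mul_ramanujanApprox_sq_lt (by linarith)
    _ ≤ -deriv lodgeDenom x := neg_le_neg (deriv_lodgeDenom_le hx)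

theorem lodgeLambda_deriv_pos (x : ℝ) (hx : 28 < x) : 0 < deriv lodgeLambda x :=
  lodgeLambda_deriv_pos_general x (by linarith)
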